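/- Suppose g(r) = o(r^{-c}) as r → ∞ for some c > d, and fix γ > 1. Let δ_n denote the minimum vertex degree of G_n(r̂_n(γ)). Then almost surely, liminf_{n→∞} δ_n/(log n) ≥ γ·H₋⁻¹(1/γ). -/

import Mathlib

open MeasureTheory ProbabilityTheory Filter Set

noncomputable section

namespace RCM

/-- The toroidal metric on the unit cube. -/
def torusDist {d : ℕ} (x y : EuclideanSpace ℝ (Fin d)) : ℝ :=
  ⨅ z : Fin d → ℤ, ‖x - y - (WithLp.equiv 2 (Fin d → ℝ)).symm (fun i => (z i : ℝ))‖

/-- The half-open unit cube `S = (-1/2, 1/2]^d`. -/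
def cube (d : ℕ) : Set (EuclideanSpace ℝ (Fin d)) :=
  {x | ∀ i, x i ∈ Set.Ioc (-(1/2) : ℝ) (1/2)}

/-- The random connection model: i.i.d. uniform points `X`, coupled Poisson counts `N`,
i.i.d. uniform edge variables `U`, with the three families mutually independent, and a
non-increasing connection function `g : [0,∞) → [0,1]` with finite positive integral `α`. -/
structure Model (d : ℕ) {Ω : Type*} [MeasurableSpace Ω] (P : Measure Ω) where
  g : ℝ → ℝ
  α : ℝ
  X : ℕ → Ω → EuclideanSpace ℝ (Fin d)
  N : ℕ → Ω → ℕ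
  U : ℕ → ℕ → Ω → ℝ
  g_antitone : AntitoneOn g (Set.Ici 0)
  g_mem : ∀ r : ℝ, 0 ≤ r → g r ∈ Set.Icc (0 : ℝ) 1
  g_integrable : MeasureTheory.Integrable (fun x : EuclideanSpace ℝ (Fin d) => g ‖x‖)
  α_def : α = ∫ x : EuclideanSpace ℝ (Fin d), g ‖x‖
  α_pos : 0 < α
  X_meas : ∀ i, Measurable (X i)
  X_unif : ∀ i : ℕ, 1 ≤ i → Measure.map (X i) P = volume.restrict (cube d)
  X_indep : iIndepFun
    (fun i : {i : ℕ // 1 ≤ i} => X i) P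
  N_meas : ∀ n, Measurable (N n)
  N_mono : ∀ ω, Monotone fun n => N n ω
  N_poisson : ∀ n k : ℕ,
    P {ω | N n ω = k} = ENNReal.ofReal (Real.exp (-(n : ℝ)) * (n : ℝ) ^ k / k.factorial)
  U_meas : ∀ i j, Measurable (U i j)
  U_unif : ∀ i j : ℕ, 1 ≤ i → i < j →
    Measure.map (U i j) P = volume.restrict (Set.Icc (0 : ℝ) 1)
  U_indep : iIndepFun
    (fun p : {p : ℕ × ℕ // 1 ≤ p.1 ∧ p.1 < p.2} => U p.1.1 p.1.2) P
  families_indep : iIndep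
    (![MeasurableSpace.comap (fun ω => fun i : ℕ => X i ω) inferInstance,
       MeasurableSpace.comap (fun ω => fun n : ℕ => N n ω) inferInstance,
       MeasurableSpace.comap (fun ω => fun p : ℕ × ℕ => U p.1 p.2 ω) inferInstance]) P

variable {d : ℕ} {Ω : Type*} [MeasurableSpace Ω] {P : Measure Ω}

/-- Adjacency in the graph `G_n(r)`: vertices `1 ≤ i,j ≤ N_n` are joined iff
`U_{ij} ≤ g(dist(X_i,X_j)/r)`. -/
def adj (M : Model d P) (n : ℕ) (r : ℝ) (ω : Ω) (i j : ℕ) : Prop :=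
  i ≠ j ∧ 1 ≤ i ∧ 1 ≤ j ∧ i ≤ M.N n ω ∧ j ≤ M.N n ω ∧
    M.U (min i j) (max i j) ω ≤ M.g (torusDist (M.X i ω) (M.X j ω) / r)

/-- The degree of vertex `i` in `G_n(r)`. -/
def deg (M : Model d P) (n : ℕ) (r : ℝ) (ω : Ω) (i : ℕ) : ℕ :=
  {j : ℕ | adj M n r ω i j}.ncard

/-- `W_n(r)`, the number of isolated vertices of `G_n(r)`. -/
def isolatedCount (M : Model d P) (n : ℕ) (r : ℝ) (ω : Ω) : ℕ :=
  {i : ℕ | 1 ≤ i ∧ i ≤ M.N n ω ∧ deg M n r ω i = 0}.ncard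


/-- `r̂_n(γ)` defined by `r̂_n(γ)^d = γ log n / (α n)`. -/
def rhat (M : Model d P) (γ : ℝ) (n : ℕ) : ℝ :=
  (γ * Real.log n / (M.α * n)) ^ ((1 : ℝ) / d)

/-- `d_n`, the critical parameter for absence of isolated nodes. -/
def critRadius (M : Model d P) (n : ℕ) (ω : Ω) : ℝ :=
  sInf {r : ℝ | 0 < r ∧ isolatedCount M n r ω = 0}

/-- The maximum vertex degree `Δ_n` of `G_n(r)`. -/
def maxDeg (M : Model d P) (n : ℕ) (r : ℝ) (ω : Ω) : ℕ :=
  (Finset.Icc 1 (M.N n ω)).sup (deg M n r ω)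

/-- The minimum vertex degree `δ_n` of `G_n(r)`. -/
def minDeg (M : Model d P) (n : ℕ) (r : ℝ) (ω : Ω) : ℕ :=
  sInf {k : ℕ | ∃ i, 1 ≤ i ∧ i ≤ M.N n ω ∧ deg M n r ω i = k}

/-- The length (toroidal metric) of the longest edge of `G_n(r)` (`0` if there are no edges). -/
def longestEdge (M : Model d P) (n : ℕ) (r : ℝ) (ω : Ω) : ℝ :=
  sSup ({0} ∪ {t : ℝ | ∃ i j, adj M n r ω i j ∧ t = torusDist (M.X i ω) (M.X j ω)})

/-- Connectivity of `G_n(r)`: any two vertices are joined by a path. -/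
def connectedGraph (M : Model d P) (n : ℕ) (r : ℝ) (ω : Ω) : Prop :=
  ∀ i j : ℕ, 1 ≤ i → i ≤ M.N n ω → 1 ≤ j → j ≤ M.N n ω →
    Relation.ReflTransGen (adj M n r ω) i j

/-- `H(x) = 1 - x + x log x` (with `H(0) = 1`, since `log 0 = 0` in Lean). -/
def H (x : ℝ) : ℝ := 1 - x + x * Real.log x

/-- The inverse of the restriction of `H` to `[1, ∞)`. -/
def Hplusinv (y : ℝ) : ℝ := sInf {x : ℝ | 1 ≤ x ∧ y ≤ H x}

/-- The inverse of the restriction of `H` to `[0, 1]`. -/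
def Hminusinv (y : ℝ) : ℝ := sInf {x : ℝ | 0 ≤ x ∧ H x ≤ y}

/-- The standard normal distribution function. -/
def stdNormalCDF (x : ℝ) : ℝ :=
  ∫ t in Set.Iic x, Real.exp (-t ^ 2 / 2) / Real.sqrt (2 * Real.pi)

/-!
Each vertex `i` has a degree that is conditionally a sum of independent indicators, whose success
probability does not depend on `X i` because the torus is homogeneous. Hence edge counts at a
vertex obey the Chernoff bound for Poisson variables of the same mean, whose rate function is `H`.
At scale `r̂_n(γ)` that mean is asymptotic to `γ log n`, so for `β < γ H₋⁻¹(1/γ)` some vertex has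
degree at most `β log n` with probability at most `n ^ (1 - κ)`, where `κ = γ H(β/γ) > 1`, up to
losses that a slightly smaller `κ` absorbs.

This need not be summable in `n`, so Borel–Cantelli is applied along `n = k ^ a` with
`a (κ - 1) > 1`. For `k ^ a ≤ n ≤ (k + 1) ^ a` every degree in `G_n` dominates the number of edges
to the points already present at time `k ^ a`, at the smaller scale belonging to `(k + 1) ^ a`, and
the ratio of these two times tends to `1`.

Since `liminf` over the reals is only meaningful for functions that are frequently bounded above,
the degree of vertex `1` is also bounded by a multiple of `log n`.
-/

/-! ### The rate function -/

lemma H_eq_klFun : H = InformationTheory.klFun := by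
  ext x
  rw [H, InformationTheory.klFun]
  ring

lemma continuous_H : Continuous H :=
  H_eq_klFun ▸ InformationTheory.continuous_klFun

lemma H_pos {x : ℝ} (hx : 0 ≤ x) (hx1 : x ≠ 1) : 0 < H x := by
  rw [H_eq_klFun]
  exact (InformationTheory.klFun_nonneg hx).lt_of_ne'
    ((InformationTheory.klFun_eq_zero_iff hx).not.2 hx1)

lemma tendsto_H_atTop : Tendsto H atTop atTop :=
  H_eq_klFun ▸ InformationTheory.tendsto_klFun_atTop

lemma lt_H_of_lt_Hminusinv {x y : ℝ} (hx : 0 ≤ x) (h : x < Hminusinv y) : y < H x := by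
  by_contra! hle
  exact h.not_ge (csInf_le ⟨0, fun _ hz => hz.1⟩ ⟨hx, hle⟩)

lemma Hminusinv_le_one {y : ℝ} (hy : 0 ≤ y) : Hminusinv y ≤ 1 :=
  csInf_le ⟨0, fun _ hz => hz.1⟩ ⟨zero_le_one, by simpa [H] using hy⟩

-- One factor `b` pays for `N_n ≥ b n`, one for passing from `k ^ a` to `(k + 1) ^ a`, and one for
-- the mean degree being at least `b γ log n`.
lemma exists_pow_three_mul_H_gt_one {γ β : ℝ} (hγ : 0 < γ) (hβ : 0 < β)
    (h : β < γ * Hminusinv (1 / γ)) :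
    ∃ b ∈ Ioo (0 : ℝ) 1, β ≤ b ^ 3 * γ ∧ 1 < b ^ 3 * γ * H (β / (b ^ 3 * γ)) := by
  have hβγ : β < γ := h.trans_le <|
    mul_le_of_le_one_right hγ.le (Hminusinv_le_one (one_div_nonneg.2 hγ.le))
  have hrate : 1 < γ * H (β / γ) := by
    have := lt_H_of_lt_Hminusinv (div_pos hβ hγ).le ((div_lt_iff₀' hγ).2 h)
    rwa [div_lt_iff₀' hγ] at this
  have hmean : Tendsto (fun b : ℝ => b ^ 3 * γ) (nhdsWithin 1 (Iio 1)) (nhds γ) := by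
    refine tendsto_nhdsWithin_of_tendsto_nhds (Continuous.tendsto' (by fun_prop) _ _ ?_)
    ring
  have hlim : Tendsto (fun b : ℝ => b ^ 3 * γ * H (β / (b ^ 3 * γ)))
      (nhdsWithin 1 (Iio 1)) (nhds (γ * H (β / γ))) :=
    hmean.mul ((continuous_H.tendsto _).comp (tendsto_const_nhds.div hmean hγ.ne'))
  obtain ⟨b, hb, hmean_b, hrate_b⟩ := (Filter.Eventually.and (Ioo_mem_nhdsLT zero_lt_one)
    ((hmean.eventually_const_lt hβγ).and (hlim.eventually_const_lt hrate))).exists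
  exact ⟨b, hb, hmean_b.le, hrate_b⟩

/-! ### Sub-Poissonian variables -/

/-- The moment generating function of `X` is everywhere at most that of a Poisson variable with
mean `m`; the Poisson analogue of `HasSubgaussianMGF`. -/
structure HasSubPoissonMGF (X : Ω → ℝ) (m : ℝ) (P : Measure Ω) : Prop where
  integrable_exp_mul : ∀ t, Integrable (fun ω => Real.exp (t * X ω)) P
  mgf_le : ∀ t, mgf X P t ≤ Real.exp (m * (Real.exp t - 1))

namespace HasSubPoissonMGF

variable {X : Ω → ℝ} {m a μ : ℝ}

lemma exp_mul_chernoff (ha : 0 < a) (hμ : 0 < μ) :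
    Real.exp (-Real.log (a / μ) * a) * Real.exp (μ * (Real.exp (Real.log (a / μ)) - 1))
      = Real.exp (-(μ * H (a / μ))) := by
  rw [← Real.exp_add, Real.exp_log (div_pos ha hμ), H]
  congr 1
  field_simp
  ring

lemma measureReal_le_le [IsFiniteMeasure P] (h : HasSubPoissonMGF X m P) (ha : 0 < a)
    (haμ : a ≤ μ) (hμm : μ ≤ m) :
    P.real {ω | X ω ≤ a} ≤ Real.exp (-(μ * H (a / μ))) := by
  have hμ : 0 < μ := ha.trans_le haμ
  have ht : Real.log (a / μ) ≤ 0 :=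
    Real.log_nonpos (div_pos ha hμ).le ((div_le_one hμ).2 haμ)
  rw [← exp_mul_chernoff ha hμ]
  refine (measure_le_le_exp_mul_mgf a ht (h.integrable_exp_mul _)).trans ?_
  gcongr
  exact (h.mgf_le _).trans (Real.exp_le_exp.2
    (mul_le_mul_of_nonpos_right hμm (sub_nonpos.2 (Real.exp_le_one_iff.2 ht))))

lemma measureReal_ge_le [IsFiniteMeasure P] (h : HasSubPoissonMGF X m P) (hμ : 0 < μ)
    (hμa : μ ≤ a) (hmμ : m ≤ μ) :
    P.real {ω | a ≤ X ω} ≤ Real.exp (-(μ * H (a / μ))) := by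
  have ht : 0 ≤ Real.log (a / μ) := Real.log_nonneg ((one_le_div hμ).2 hμa)
  rw [← exp_mul_chernoff (hμ.trans_le hμa) hμ]
  refine (measure_ge_le_exp_mul_mgf a ht (h.integrable_exp_mul _)).trans ?_
  gcongr
  exact (h.mgf_le _).trans (Real.exp_le_exp.2
    (mul_le_mul_of_nonneg_right hmμ (sub_nonneg.2 (Real.one_le_exp ht))))

lemma of_map {A : Type*} [MeasurableSpace A] {Y : Ω → A} {X : A → ℝ} (hY : AEMeasurable Y P)
    (h : HasSubPoissonMGF X m (P.map Y)) : HasSubPoissonMGF (X ∘ Y) m P where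
  integrable_exp_mul t := (h.integrable_exp_mul t).comp_aemeasurable hY
  mgf_le t := by
    rw [← mgf_map hY (h.integrable_exp_mul t).aestronglyMeasurable]
    exact h.mgf_le t

lemma sum_of_iIndepFun [IsFiniteMeasure P] {ι : Type*} {X : ι → Ω → ℝ} {m : ι → ℝ}
    (hX : ∀ i, Measurable (X i)) (hind : iIndepFun X P) {s : Finset ι}
    (h : ∀ i ∈ s, HasSubPoissonMGF (X i) (m i) P) :
    HasSubPoissonMGF (∑ i ∈ s, X i) (∑ i ∈ s, m i) P where
  integrable_exp_mul t :=
    hind.integrable_exp_mul_sum hX fun i hi => (h i hi).integrable_exp_mul t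
  mgf_le t := by
    rw [hind.mgf_sum hX, Finset.sum_mul, Real.exp_sum]
    exact Finset.prod_le_prod (fun _ _ => mgf_nonneg) fun i hi => (h i hi).mgf_le t

end HasSubPoissonMGF

lemma hasSubPoissonMGF_indicator [IsProbabilityMeasure P] {A : Set Ω} (hA : MeasurableSet A) :
    HasSubPoissonMGF (A.indicator fun _ => 1) (P.real A) P := by
  have hexp : ∀ t, (fun ω => Real.exp (t * A.indicator (fun _ => 1) ω))
      = fun ω => 1 + A.indicator (fun _ => Real.exp t - 1) ω := fun t => by
    ext ω
    by_cases hω : ω ∈ A <;> simp [hω]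
  have hint : ∀ t, Integrable (A.indicator fun _ => Real.exp t - 1) P :=
    fun t => (integrable_const _).indicator hA
  refine ⟨fun t => hexp t ▸ (integrable_const 1).add (hint t), fun t => ?_⟩
  rw [mgf, hexp, integral_add (integrable_const 1) (hint t), integral_indicator_const _ hA]
  simpa [add_comm] using Real.add_one_le_exp (P.real A * (Real.exp t - 1))

lemma hasSubPoissonMGF_poissonMeasure (r : NNReal) :
    HasSubPoissonMGF (fun k : ℕ => (k : ℝ)) r (poissonMeasure r) := by
  have hsum : ∀ t, HasSum
      (fun k : ℕ => Real.exp (-r) * r ^ k / k.factorial * Real.exp (t * k))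
      (Real.exp (r * (Real.exp t - 1))) := fun t => by
    have hpois := (hasSum_one_poissonMeasure (r * (Real.exp t).toNNReal)).mul_left
      (Real.exp (r * (Real.exp t - 1)))
    simp only [NNReal.coe_mul, Real.coe_toNNReal _ (Real.exp_pos t).le, mul_one] at hpois
    refine hpois.congr_fun fun k => ?_
    have hshift : Real.exp (-r)
        = Real.exp (r * (Real.exp t - 1)) * Real.exp (-(r * Real.exp t)) := by
      rw [← Real.exp_add]
      ring_nf
    rw [hshift, mul_comm t, Real.exp_nat_mul, mul_pow]
    ring
  refine ⟨fun t => integrable_poissonMeasure_iff.2 ?_, fun t => ?_⟩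
  · simpa only [Real.norm_eq_abs, Real.abs_exp] using (hsum t).summable
  · rw [mgf, integral_poissonMeasure]
    exact (hsum t).tsum_eq.le

/-! ### Probability -/

lemma ae_eventually_notMem_of_le [IsFiniteMeasure P] {s : ℕ → Set Ω} {a : ℕ → ℝ}
    (ha : Summable a) (h : ∀ᶠ n in atTop, P.real (s n) ≤ a n) :
    ∀ᵐ ω ∂P, ∀ᶠ n in atTop, ω ∉ s n := by
  have hs : Summable fun n => P.real (s n) :=
    .of_norm_bounded_eventually_nat ha <| h.mono fun n hn => by
      rwa [Real.norm_of_nonneg measureReal_nonneg]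
  refine ae_eventually_notMem ?_
  simp_rw [← ofReal_measureReal (measure_ne_top P _)]
  rw [← ENNReal.ofReal_tsum_of_nonneg (fun _ => measureReal_nonneg) hs]
  exact ENNReal.ofReal_ne_top

lemma ae_le_of_forall_lt {f : Ω → ℝ} {a : ℝ} (h : ∀ b < a, ∀ᵐ ω ∂P, b ≤ f ω) :
    ∀ᵐ ω ∂P, a ≤ f ω := by
  obtain ⟨u, -, hua, hu⟩ := exists_seq_strictMono_tendsto a
  filter_upwards [ae_all_iff.2 fun n => h (u n) (hua n)] with ω hω
  exact le_of_tendsto' hu hω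

lemma indepFun_pi_of_notMem_range {ι κ A : Type*} [Finite κ] [MeasurableSpace A]
    {f : ι → Ω → A} (hf : iIndepFun f P) (hm : ∀ i, Measurable (f i)) {i : ι} {e : κ → ι}
    (hi : i ∉ range e) : IndepFun (f i) (fun ω k => f (e k) ω) P := by
  classical
  let T : Finset ι := (finite_range e).toFinset
  have hT : ∀ k, e k ∈ T := fun k => (finite_range e).mem_toFinset.2 (mem_range_self k)
  have hdisj : Disjoint {i} T := by simpa [T] using hi
  exact (hf.indepFun_finset {i} T hdisj hm).comp
    (ψ := fun x k => x ⟨e k, hT k⟩)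
    (measurable_pi_apply (⟨i, Finset.mem_singleton_self i⟩ : ({i} : Finset ι))) (by fun_prop)

lemma lintegral_prod_comp_of_indepFun [IsProbabilityMeasure P] {κ A B : Type*} [Fintype κ]
    [MeasurableSpace A] [MeasurableSpace B] {Y : Ω → A} {Z : κ → Ω → B}
    (hY : Measurable Y) (hZ : ∀ k, Measurable (Z k))
    (hYZ : IndepFun Y (fun ω k => Z k ω) P) (hind : iIndepFun Z P)
    {F : κ → A → B → ENNReal} (hF : ∀ k, Measurable (Function.uncurry (F k))) :
    ∫⁻ ω, ∏ k, F k (Y ω) (Z k ω) ∂P = ∫⁻ ω, ∏ k, ∫⁻ z, F k (Y ω) z ∂(P.map (Z k)) ∂P := by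
  have hZ' : Measurable (fun ω k => Z k ω) := measurable_pi_lambda _ hZ
  have hFprod : Measurable (fun p : A × (κ → B) => ∏ k, F k p.1 (p.2 k)) :=
    Finset.measurable_prod _ fun k _ =>
      (hF k).comp (measurable_fst.prodMk ((measurable_pi_apply k).comp measurable_snd))
  have hsection : ∀ ω k, Measurable (F k (Y ω)) := fun ω k => (hF k).comp measurable_prodMk_left
  have := Measure.isProbabilityMeasure_map (μ := P) hZ'.aemeasurable
  calc ∫⁻ ω, ∏ k, F k (Y ω) (Z k ω) ∂P
      = ∫⁻ p, ∏ k, F k p.1 (p.2 k) ∂((P.map Y).prod (P.map fun ω k => Z k ω)) := by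
        rw [← (indepFun_iff_map_prod_eq_prod_map_map hY.aemeasurable hZ'.aemeasurable).1 hYZ,
          lintegral_map hFprod (hY.prodMk hZ')]
    _ = ∫⁻ ω, ∫⁻ z, ∏ k, F k (Y ω) (z k) ∂(P.map fun ω k => Z k ω) ∂P := by
        rw [lintegral_prod _ hFprod.aemeasurable, lintegral_map hFprod.lintegral_prod_right' hY]
    _ = ∫⁻ ω, ∏ k, ∫⁻ z, F k (Y ω) z ∂(P.map (Z k)) ∂P := by
        refine lintegral_congr fun ω => ?_
        rw [lintegral_map (f := fun z => ∏ k, F k (Y ω) (z k))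
          (hFprod.comp measurable_prodMk_left) hZ']
        simp_rw [fun k => lintegral_map (μ := P) (hsection ω k) (hZ k)]
        exact lintegral_prod_eq_prod_lintegral_of_indepFun Finset.univ
          (fun k ω' => F k (Y ω) (Z k ω')) (hind.comp (fun k => F k (Y ω)) (hsection ω))
          fun k => (hsection ω k).comp (hZ k)

/-! ### Limits -/

lemma summable_exp_neg_natCast_mul {κ : ℝ} (hκ : 0 < κ) :
    Summable fun n : ℕ => Real.exp (-(n * κ)) := by
  simpa only [mul_neg] using Real.summable_exp_nat_mul_iff.2 (neg_lt_zero.2 hκ)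

lemma aecover_preimage_smul {E : Type*} [NormedAddCommGroup E] [NormedSpace ℝ E] [MeasurableSpace E]
    [BorelSpace E] (μ : Measure E) {s : Set E} (hs : MeasurableSet s) (h0 : s ∈ nhds 0) :
    AECover μ (nhdsWithin 0 (Ioi (0 : ℝ))) fun r : ℝ => (r • ·) ⁻¹' s where
  ae_eventually_mem := .of_forall fun v => by
    have : Tendsto (fun r : ℝ => r • v) (nhdsWithin 0 (Ioi 0)) (nhds 0) :=
      tendsto_nhdsWithin_of_tendsto_nhds (Continuous.tendsto' (by fun_prop) _ _ (zero_smul ℝ v))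
    exact this.eventually_mem h0
  measurableSet r := hs.preimage (measurable_const_smul r)

lemma eventually_of_forall_between_pow {a : ℕ} (ha : a ≠ 0) {p : ℕ → Prop}
    (h : ∀ᶠ k in atTop, ∀ n, k ^ a ≤ n → n ≤ (k + 1) ^ a → p n) : ∀ᶠ n in atTop, p n := by
  obtain ⟨k₀, hk₀⟩ := eventually_atTop.1 h
  filter_upwards [eventually_ge_atTop (k₀ ^ a)] with n hn
  exact hk₀ (Nat.nthRoot a n) ((Nat.le_nthRoot_iff ha).2 hn) n
    (Nat.pow_nthRoot_le_iff.2 (.inl ha)) (Nat.lt_pow_nthRoot_add_one ha n).le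

lemma tendsto_natCast_div_succ_pow (a : ℕ) :
    Tendsto (fun k : ℕ => (k : ℝ) ^ a / ((k + 1 : ℕ) : ℝ) ^ a) atTop (nhds 1) := by
  simpa [div_pow] using (tendsto_natCast_div_add_atTop (1 : ℝ)).pow a

lemma eventually_ceil_mul_succ_pow_add_one_le {b c : ℝ} (hc : 0 ≤ c) (hcb : c < b) {a : ℕ}
    (ha : a ≠ 0) :
    ∀ᶠ k : ℕ in atTop, ⌈c * ((k + 1) ^ a : ℕ)⌉₊ + 1 ≤ b * (k : ℝ) ^ a := by
  have hpow : Tendsto (fun k : ℕ => ((k + 1 : ℕ) : ℝ) ^ a) atTop atTop :=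
    (tendsto_pow_atTop ha).comp (tendsto_natCast_atTop_atTop.comp (tendsto_add_atTop_nat 1))
  have hleft : Tendsto (fun k : ℕ => c + 2 / ((k + 1 : ℕ) : ℝ) ^ a) atTop (nhds c) := by
    simpa using tendsto_const_nhds.add (hpow.const_div_atTop 2)
  have hright := (tendsto_natCast_div_succ_pow a).const_mul b
  rw [mul_one] at hright
  filter_upwards [hleft.eventually_lt hright hcb] with k hk
  have hpos : (0 : ℝ) < ((k + 1 : ℕ) : ℝ) ^ a := by positivity
  have hceil := Nat.ceil_lt_add_one (mul_nonneg hc hpos.le)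
  rw [← mul_div_assoc, lt_div_iff₀ hpos, add_mul, div_mul_cancel₀ _ hpos.ne'] at hk
  rw [Nat.cast_pow]
  linarith

/-! ### The torus -/

lemma torusDist_nonneg (x y : EuclideanSpace ℝ (Fin d)) : 0 ≤ torusDist x y :=
  Real.iInf_nonneg fun _ => norm_nonneg _

lemma measurable_torusDist {A : Type*} [MeasurableSpace A]
    {f h : A → EuclideanSpace ℝ (Fin d)} (hf : Measurable f) (hh : Measurable h) :
    Measurable fun a => torusDist (f a) (h a) := by
  unfold torusDist
  exact .iInf fun z => by fun_prop

/-- The inclusion of the lattice `ℤ^d` in Euclidean space. It is bundled as a homomorphism so that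
its range is a group acting by translations, for which `cube d` is a fundamental domain. -/
def intVec (d : ℕ) : (Fin d → ℤ) →+ EuclideanSpace ℝ (Fin d) where
  toFun z := (WithLp.equiv 2 (Fin d → ℝ)).symm (fun i => (z i : ℝ))
  map_zero' := by ext i; simp
  map_add' x y := by ext i; simp

lemma intVec_apply (z : Fin d → ℤ) (i : Fin d) : intVec d z i = z i := rfl

lemma torusDist_intVec_add (x y : EuclideanSpace ℝ (Fin d)) (z : Fin d → ℤ) :
    torusDist x (intVec d z + y) = torusDist x y := by
  unfold torusDist
  refine (Equiv.iInf_congr (Equiv.addRight z) fun w => ?_)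
  congr 1
  ext i
  simp only [Equiv.coe_addRight, PiLp.sub_apply, PiLp.add_apply, intVec_apply,
    WithLp.equiv_symm_apply, Pi.add_apply, Int.cast_add]
  ring

lemma norm_le_norm_sub_intVec {w : EuclideanSpace ℝ (Fin d)} (hw : w ∈ cube d) (z : Fin d → ℤ) :
    ‖w‖ ≤ ‖w - intVec d z‖ := by
  rw [EuclideanSpace.norm_eq, EuclideanSpace.norm_eq]
  refine Real.sqrt_le_sqrt (Finset.sum_le_sum fun i _ => ?_)
  obtain ⟨hlower, hupper⟩ := hw i
  rw [PiLp.sub_apply, intVec_apply, Real.norm_eq_abs, Real.norm_eq_abs, sq_abs, sq_abs]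
  rcases lt_trichotomy (z i) 0 with hz | hz | hz
  · have : (z i : ℝ) ≤ -1 := by exact_mod_cast (by lia : z i ≤ -1)
    nlinarith
  · simp [hz]
  · have : (1 : ℝ) ≤ z i := by exact_mod_cast hz
    nlinarith

lemma torusDist_eq_norm_of_mem_cube {x y : EuclideanSpace ℝ (Fin d)} (h : x - y ∈ cube d) :
    torusDist x y = ‖x - y‖ := by
  refine le_antisymm ?_ (le_ciInf (norm_le_norm_sub_intVec h))
  refine (ciInf_le ⟨0, forall_mem_range.2 fun _ => norm_nonneg _⟩ (0 : Fin d → ℤ)).trans_eq ?_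
  congr 1
  ext i
  simp

lemma measurableSet_cube : MeasurableSet (cube d) := by
  rw [cube, ofPred_forall]
  exact .iInter fun i => measurableSet_Ioc.preimage (by fun_prop)

lemma cube_mem_nhds_zero : cube d ∈ nhds 0 := by
  have : ∀ i : Fin d, ∀ᶠ x : EuclideanSpace ℝ (Fin d) in nhds 0, x i ∈ Ioc (-(1/2) : ℝ) (1/2) :=
    fun i => (by fun_prop : Continuous fun x : EuclideanSpace ℝ (Fin d) => x i).continuousAt
      |>.eventually_mem (Ioc_mem_nhds (by simp) (by simp))
  exact eventually_all.2 this

lemma existsUnique_intVec_add_mem_cube (x : EuclideanSpace ℝ (Fin d)) :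
    ∃! l : (intVec d).range, (l : EuclideanSpace ℝ (Fin d)) + x ∈ cube d := by
  have h := fun i => existsUnique_add_zsmul_mem_Ioc (one_pos : (0 : ℝ) < 1) (x i) (-(1/2))
  simp only [zsmul_eq_mul, mul_one, show (-(1/2) : ℝ) + 1 = 1/2 by norm_num, add_comm (x _)] at h
  choose z hz huniq using h
  refine ⟨⟨intVec d z, z, rfl⟩, hz, ?_⟩
  rintro ⟨_, w, rfl⟩ hw
  exact Subtype.ext (congrArg (intVec d) (funext fun i => huniq i _ (hw i)))

instance : Countable (intVec d).range :=
  (countable_range (intVec d)).to_subtype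

lemma isAddFundamentalDomain_cube :
    IsAddFundamentalDomain (intVec d).range (cube d) :=
  .mk' measurableSet_cube.nullMeasurableSet existsUnique_intVec_add_mem_cube

lemma isAddFundamentalDomain_preimage_sub_left_cube (x : EuclideanSpace ℝ (Fin d)) :
    IsAddFundamentalDomain (intVec d).range ((fun y => x - y) ⁻¹' cube d) := by
  refine isAddFundamentalDomain_cube.preimage_of_equiv
    (Measure.measurePreserving_sub_left volume x).quasiMeasurePreserving
    (Equiv.neg (intVec d).range).bijective fun l y => ?_
  simp only [Equiv.neg_apply, AddSubgroup.vadd_def, AddSubgroup.coe_neg, vadd_eq_add]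
  abel

lemma setIntegral_cube_torusDist (f : ℝ → ℝ) (x : EuclideanSpace ℝ (Fin d)) :
    ∫ y in cube d, f (torusDist x y) = ∫ w in cube d, f ‖w‖ :=
  calc ∫ y in cube d, f (torusDist x y)
      = ∫ y in (fun y => x - y) ⁻¹' cube d, f (torusDist x y) := by
        refine isAddFundamentalDomain_cube.setIntegral_eq
          (isAddFundamentalDomain_preimage_sub_left_cube x) ?_
        rintro ⟨_, z, rfl⟩ y
        rw [AddSubgroup.vadd_def, vadd_eq_add, torusDist_intVec_add]
    _ = ∫ y in (fun y => x - y) ⁻¹' cube d, f ‖x - y‖ :=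
        setIntegral_congr_fun (measurableSet_cube.preimage (by fun_prop)) fun y hy => by
          simp only [torusDist_eq_norm_of_mem_cube hy]
    _ = ∫ w in cube d, f ‖w‖ :=
        (Measure.measurePreserving_sub_left volume x).setIntegral_preimage_emb
          (Homeomorph.subLeft x).measurableEmbedding (fun w => f ‖w‖) _

/-! ### The connection probability -/

/-- The probability that two given vertices are joined at scale `r`. By homogeneity of the torus
one of them may be placed at the origin, where `torusDist` is the Euclidean norm. -/
def connProb (M : Model d P) (r : ℝ) : ℝ := ∫ w in cube d, M.g (‖w‖ / r)

lemma connProb_nonneg (M : Model d P) {r : ℝ} (hr : 0 < r) : 0 ≤ connProb M r :=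
  integral_nonneg fun w => (M.g_mem _ (div_nonneg (norm_nonneg w) hr.le)).1

lemma connProb_eq_pow_mul_setIntegral (M : Model d P) {r : ℝ} (hr : 0 < r) :
    connProb M r = r ^ d * ∫ v in (r • ·) ⁻¹' cube d, M.g ‖v‖ := by
  have h := Measure.setIntegral_comp_smul (volume : Measure (EuclideanSpace ℝ (Fin d)))
    (fun v => M.g ‖v‖) (cube d) (inv_ne_zero hr.ne')
  rw [connProb, preimage_smul₀ hr.ne']
  simpa only [norm_smul, norm_inv, Real.norm_of_nonneg hr.le, inv_mul_eq_div,
    finrank_euclideanSpace_fin, smul_eq_mul, inv_pow, inv_inv, abs_of_pos (pow_pos hr d)] using h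

lemma connProb_le (M : Model d P) {r : ℝ} (hr : 0 < r) : connProb M r ≤ M.α * r ^ d := by
  rw [connProb_eq_pow_mul_setIntegral M hr, mul_comm, M.α_def]
  exact mul_le_mul_of_nonneg_right (setIntegral_le_integral M.g_integrable
    (.of_forall fun v => (M.g_mem _ (norm_nonneg v)).1)) (pow_pos hr d).le

lemma tendsto_connProb_div_pow (M : Model d P) :
    Tendsto (fun r => connProb M r / r ^ d) (nhdsWithin 0 (Ioi 0)) (nhds M.α) := by
  rw [M.α_def]
  refine ((aecover_preimage_smul volume measurableSet_cube cube_mem_nhds_zero)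
    |>.integral_tendsto_of_countably_generated M.g_integrable).congr' ?_
  filter_upwards [self_mem_nhdsWithin] with r hr
  rw [connProb_eq_pow_mul_setIntegral M hr, mul_div_cancel_left₀ _ (pow_pos hr d).ne']

lemma g_torusDist_mem (M : Model d P) {r : ℝ} (hr : 0 < r) (x y : EuclideanSpace ℝ (Fin d)) :
    M.g (torusDist x y / r) ∈ Icc (0 : ℝ) 1 :=
  M.g_mem _ (div_nonneg (torusDist_nonneg _ _) hr.le)

lemma measurable_g_torusDist (M : Model d P) {r : ℝ} (hr : 0 < r) {A : Type*} [MeasurableSpace A]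
    {f h : A → EuclideanSpace ℝ (Fin d)} (hf : Measurable f) (hh : Measurable h) :
    Measurable fun a => M.g (torusDist (f a) (h a) / r) := by
  have hanti : Antitone fun t => M.g (max t 0) := fun s t hst =>
    M.g_antitone (le_max_right s 0) (le_max_right t 0) (max_le_max_right 0 hst)
  simpa only [Function.comp_def, max_eq_left (div_nonneg (torusDist_nonneg _ _) hr.le)]
    using hanti.measurable.comp ((measurable_torusDist hf hh).div_const r)

lemma lintegral_cube_g_torusDist [IsProbabilityMeasure P] (M : Model d P) {r : ℝ} (hr : 0 < r)
    (x : EuclideanSpace ℝ (Fin d)) :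
    ∫⁻ y in cube d, ENNReal.ofReal (M.g (torusDist x y / r)) = ENNReal.ofReal (connProb M r) := by
  have : IsProbabilityMeasure (volume.restrict (cube d)) :=
    M.X_unif 1 le_rfl ▸ Measure.isProbabilityMeasure_map (M.X_meas 1).aemeasurable
  have hmem := g_torusDist_mem M hr x
  have hint : Integrable (fun y => M.g (torusDist x y / r)) (volume.restrict (cube d)) :=
    .of_mem_Icc 0 1 (measurable_g_torusDist M hr measurable_const measurable_id).aemeasurable
      (.of_forall hmem)
  rw [← ofReal_integral_eq_lintegral_ofReal hint (.of_forall fun y => (hmem y).1),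
    setIntegral_cube_torusDist (fun t => M.g (t / r)) x, connProb]

/-! ### The number of vertices -/

lemma map_N_eq_poissonMeasure (M : Model d P) (n : ℕ) :
    P.map (M.N n) = poissonMeasure n := by
  refine Measure.ext_of_singleton fun k => ?_
  rw [Measure.map_apply (M.N_meas n) (measurableSet_singleton k), poissonMeasure_singleton,
    NNReal.coe_natCast]
  exact M.N_poisson n k

lemma hasSubPoissonMGF_N (M : Model d P) (n : ℕ) :
    HasSubPoissonMGF (fun ω => (M.N n ω : ℝ)) n P :=
  .of_map (X := fun k : ℕ => (k : ℝ)) (M.N_meas n).aemeasurable <| by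
    rw [map_N_eq_poissonMeasure]
    exact_mod_cast hasSubPoissonMGF_poissonMeasure n

lemma ae_eventually_mul_le_N [IsProbabilityMeasure P] (M : Model d P) {b : ℝ} (hb : b ∈ Ioo 0 1) :
    ∀ᵐ ω ∂P, ∀ᶠ n : ℕ in atTop, b * n ≤ M.N n ω := by
  have h : ∀ᵐ ω ∂P, ∀ᶠ n : ℕ in atTop, ω ∉ {ω | (M.N n ω : ℝ) ≤ b * n} := by
    refine ae_eventually_notMem_of_le (summable_exp_neg_natCast_mul (H_pos hb.1.le hb.2.ne)) ?_
    filter_upwards [eventually_gt_atTop 0] with n hn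
    have hn' : (0 : ℝ) < n := Nat.cast_pos.2 hn
    simpa [hn'.ne'] using (hasSubPoissonMGF_N M n).measureReal_le_le (mul_pos hb.1 hn')
      (mul_le_of_le_one_left hn'.le hb.2.le) le_rfl
  filter_upwards [h] with ω hω
  exact hω.mono fun n hn => (not_le.1 hn).le

lemma ae_eventually_N_le_two_mul [IsProbabilityMeasure P] (M : Model d P) :
    ∀ᵐ ω ∂P, ∀ᶠ n in atTop, M.N n ω ≤ 2 * n := by
  have h : ∀ᵐ ω ∂P, ∀ᶠ n : ℕ in atTop, ω ∉ {ω | 2 * (n : ℝ) ≤ M.N n ω} := by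
    refine ae_eventually_notMem_of_le
      (summable_exp_neg_natCast_mul (H_pos zero_le_two one_lt_two.ne')) ?_
    filter_upwards [eventually_gt_atTop 0] with n hn
    have hn' : (0 : ℝ) < n := Nat.cast_pos.2 hn
    simpa [hn'.ne'] using (hasSubPoissonMGF_N M n).measureReal_ge_le (a := 2 * n) hn'
      (by linarith) le_rfl
  filter_upwards [h] with ω hω
  exact hω.mono fun n hn => by exact_mod_cast (not_le.1 hn).le

/-! ### Edges at a fixed vertex -/

/-- The event that the points `i` and `j` are joined at scale `r`, whether or not both of them have
arrived. -/
def edgeEvent (M : Model d P) (r : ℝ) (i j : ℕ) : Set Ω :=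
  {ω | M.U (min i j) (max i j) ω ≤ M.g (torusDist (M.X i ω) (M.X j ω) / r)}

lemma measurableSet_edgeEvent (M : Model d P) {r : ℝ} (hr : 0 < r) (i j : ℕ) :
    MeasurableSet (edgeEvent M r i j) :=
  measurableSet_le (M.U_meas _ _) (measurable_g_torusDist M hr (M.X_meas i) (M.X_meas j))

lemma edgeEvent_mono (M : Model d P) {r' r : ℝ} (hr' : 0 < r') (hrr : r' ≤ r) (i j : ℕ) :
    edgeEvent M r' i j ⊆ edgeEvent M r i j := fun ω hω => by
  have h0 := torusDist_nonneg (M.X i ω) (M.X j ω)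
  exact hω.out.trans (M.g_antitone (div_nonneg h0 (hr'.le.trans hrr)) (div_nonneg h0 hr'.le)
    (div_le_div_of_nonneg_left h0 hr' hrr))

section Independence

variable {κ : Type*} {i : ℕ}

lemma iIndepFun_U_min_max (M : Model d P) (hi : 1 ≤ i) :
    iIndepFun (fun j : {j : ℕ // 1 ≤ j ∧ j ≠ i} => M.U (min i j) (max i j)) P := by
  let e : {j : ℕ // 1 ≤ j ∧ j ≠ i} → {p : ℕ × ℕ // 1 ≤ p.1 ∧ p.1 < p.2} := fun j =>
    ⟨(min i j, max i j), le_min hi j.2.1, min_lt_max.2 j.2.2.symm⟩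
  refine M.U_indep.precomp (g := e) fun j k hjk => Subtype.ext ?_
  lia

lemma iIndepFun_X_of_ne (M : Model d P) (i : ℕ) :
    iIndepFun (fun j : {j : ℕ // 1 ≤ j ∧ j ≠ i} => M.X j) P :=
  M.X_indep.precomp
    (g := fun j : {j : ℕ // 1 ≤ j ∧ j ≠ i} => (⟨j, j.2.1⟩ : {i : ℕ // 1 ≤ i})) fun _ _ hjk =>
      Subtype.ext (Subtype.mk.inj hjk)

lemma indepFun_X_U_min_max (M : Model d P) (i : ℕ) (e : κ → ℕ) :
    IndepFun (fun ω j => M.X j ω) (fun ω k => M.U (min i (e k)) (max i (e k)) ω) P := by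
  have h : IndepFun (fun ω (j : ℕ) => M.X j ω) (fun ω (p : ℕ × ℕ) => M.U p.1 p.2 ω) P :=
    (IndepFun_iff_Indep _ _ _).2 (M.families_indep.indep (i := 0) (j := 2) (by decide))
  exact h.comp measurable_id (ψ := fun u k => u (min i (e k), max i (e k))) (by fun_prop)

lemma measure_iInter_edgeEvent_eq_lintegral [IsProbabilityMeasure P] [Fintype κ] (M : Model d P)
    {r : ℝ} (hr : 0 < r) (hi : 1 ≤ i) (e : κ ↪ {j : ℕ // 1 ≤ j ∧ j ≠ i}) :
    P (⋂ k, edgeEvent M r i (e k))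
      = ∫⁻ ω, ∏ k, ENNReal.ofReal (M.g (torusDist (M.X i ω) (M.X (e k) ω) / r)) ∂P := by
  let B (k : κ) (x : ℕ → EuclideanSpace ℝ (Fin d)) : Set ℝ :=
    Iic (M.g (torusDist (x i) (x (e k)) / r))
  have hB : ∀ k, Measurable (Function.uncurry fun x => (B k x).indicator (1 : ℝ → ENNReal)) :=
    fun k => (measurable_const (a := (1 : ENNReal))).indicator (measurableSet_le measurable_snd
      (measurable_g_torusDist M hr (by fun_prop) (by fun_prop)))
  have huniform : ∀ k, ∀ t ∈ Icc (0 : ℝ) 1,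
      P.map (M.U (min i (e k)) (max i (e k))) (Iic t) = ENNReal.ofReal t := fun k t ht => by
    rw [M.U_unif _ _ (le_min hi (e k).2.1) (min_lt_max.2 (e k).2.2.symm),
      Measure.restrict_apply measurableSet_Iic, ← Ici_inter_Iic, inter_left_comm, Iic_inter_Iic,
      min_eq_left ht.2, Ici_inter_Iic, Real.volume_Icc, sub_zero]
  calc P (⋂ k, edgeEvent M r i (e k))
      = ∫⁻ ω, ∏ k, (B k fun j => M.X j ω).indicator 1 (M.U (min i (e k)) (max i (e k)) ω) ∂P := by
        rw [← lintegral_indicator_one (.iInter fun k => measurableSet_edgeEvent M hr _ _)]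
        refine lintegral_congr fun ω => ?_
        classical
        rw [indicator_apply]
        simp [indicator_apply, Finset.prod_ite_zero, edgeEvent, B]
    _ = ∫⁻ ω, ∏ k, P.map (M.U (min i (e k)) (max i (e k))) (B k fun j => M.X j ω) ∂P := by
        rw [lintegral_prod_comp_of_indepFun (measurable_pi_lambda _ M.X_meas)
          (fun k => M.U_meas _ _) (indepFun_X_U_min_max M i fun k => e k)
          ((iIndepFun_U_min_max M hi).precomp e.injective) hB]
        exact lintegral_congr fun ω => Finset.prod_congr rfl fun k _ =>
          lintegral_indicator_one measurableSet_Iic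
    _ = _ := lintegral_congr fun ω => Finset.prod_congr rfl fun k _ =>
        huniform k _ (g_torusDist_mem M hr _ _)

lemma measure_iInter_edgeEvent [IsProbabilityMeasure P] [Fintype κ] (M : Model d P) {r : ℝ}
    (hr : 0 < r) (hi : 1 ≤ i) (e : κ ↪ {j : ℕ // 1 ≤ j ∧ j ≠ i}) :
    P (⋂ k, edgeEvent M r i (e k)) = ENNReal.ofReal (connProb M r) ^ Fintype.card κ := by
  have hindep : IndepFun (M.X i) (fun ω k => M.X (e k) ω) P :=
    indepFun_pi_of_notMem_range M.X_indep (fun j => M.X_meas j)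
      (i := ⟨i, hi⟩) (e := fun k => ⟨e k, (e k).2.1⟩)
      (by rintro ⟨k, hk⟩; exact (e k).2.2 (congrArg Subtype.val hk))
  rw [measure_iInter_edgeEvent_eq_lintegral M hr hi e,
    lintegral_prod_comp_of_indepFun (F := fun _ x y => ENNReal.ofReal (M.g (torusDist x y / r)))
      (M.X_meas i) (fun k => M.X_meas (e k)) hindep ((iIndepFun_X_of_ne M i).precomp e.injective)
      fun _ => (measurable_g_torusDist M hr measurable_fst measurable_snd).ennreal_ofReal]
  simp [fun k => M.X_unif (e k) (e k).2.1, lintegral_cube_g_torusDist M hr]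

lemma measure_edgeEvent [IsProbabilityMeasure P] (M : Model d P) {r : ℝ} (hr : 0 < r) (hi : 1 ≤ i)
    {j : ℕ} (hj : 1 ≤ j ∧ j ≠ i) : P (edgeEvent M r i j) = ENNReal.ofReal (connProb M r) := by
  have h : P (⋂ _ : Unit, edgeEvent M r i j) = _ := measure_iInter_edgeEvent M hr hi
    ⟨fun _ => ⟨j, hj⟩, fun _ _ _ => rfl⟩
  simpa only [iInter_const, Fintype.card_unit, pow_one] using h

lemma iIndepSet_edgeEvent [IsProbabilityMeasure P] (M : Model d P) {r : ℝ} (hr : 0 < r)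
    (hi : 1 ≤ i) : iIndepSet (fun j : {j : ℕ // 1 ≤ j ∧ j ≠ i} => edgeEvent M r i j) P := by
  rw [iIndepSet_iff_meas_biInter (f := fun j : {j : ℕ // 1 ≤ j ∧ j ≠ i} => edgeEvent M r i j)
    fun j => measurableSet_edgeEvent M hr i j]
  intro s
  simp_rw [fun j : {j : ℕ // 1 ≤ j ∧ j ≠ i} => measure_edgeEvent M hr hi j.2]
  simpa [iInter_subtype] using measure_iInter_edgeEvent M hr hi (.subtype (· ∈ s))

end Independence

open scoped Classical in
/-- The number of points `j ∈ J` joined to `i` at scale `r`. -/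
def edgeCount (M : Model d P) (r : ℝ) (i : ℕ) (J : Finset ℕ) (ω : Ω) : ℕ :=
  (J.filter fun j => ω ∈ edgeEvent M r i j).card

lemma edgeCount_mono (M : Model d P) {r' r : ℝ} (hr' : 0 < r') (hrr : r' ≤ r) (i : ℕ)
    {J' J : Finset ℕ} (hJ : J' ⊆ J) (ω : Ω) : edgeCount M r' i J' ω ≤ edgeCount M r i J ω := by
  classical
  exact Finset.card_le_card ((Finset.filter_subset_filter _ hJ).trans
    (Finset.monotone_filter_right J fun j _ hω => edgeEvent_mono M hr' hrr i j hω))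

lemma edgeCount_eq_sum_indicator (M : Model d P) (r : ℝ) (i : ℕ) (J : Finset ℕ) (ω : Ω) :
    (edgeCount M r i J ω : ℝ) = ∑ j : J, (edgeEvent M r i j).indicator (fun _ => (1 : ℝ)) ω := by
  classical
  rw [edgeCount, Finset.card_filter, Nat.cast_sum,
    Finset.sum_coe_sort J fun j => (edgeEvent M r i j).indicator (fun _ => (1 : ℝ)) ω]
  exact Finset.sum_congr rfl fun j _ => by rw [indicator_apply]; push_cast; rfl

lemma hasSubPoissonMGF_edgeCount [IsProbabilityMeasure P] (M : Model d P) {r : ℝ} (hr : 0 < r)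
    {i : ℕ} (hi : 1 ≤ i) {J : Finset ℕ} (hJ : ∀ j ∈ J, 1 ≤ j ∧ j ≠ i) :
    HasSubPoissonMGF (fun ω => (edgeCount M r i J ω : ℝ)) (J.card * connProb M r) P := by
  have hmeas : ∀ j : J, MeasurableSet (edgeEvent M r i j) :=
    fun j => measurableSet_edgeEvent M hr i j
  have hind : iIndepFun (fun j : J => (edgeEvent M r i j).indicator fun _ => (1 : ℝ)) P :=
    (iIndepSet_edgeEvent M hr hi).iIndepFun_indicator.precomp
      (g := fun j : J => (⟨j, hJ j j.2⟩ : {j : ℕ // 1 ≤ j ∧ j ≠ i}))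
      fun _ _ h => Subtype.ext (Subtype.mk.inj h)
  have hsum := HasSubPoissonMGF.sum_of_iIndepFun (s := Finset.univ)
    (fun j => measurable_const.indicator (hmeas j)) hind
    fun j _ => hasSubPoissonMGF_indicator (hmeas j)
  have hprob : ∀ j : J, P.real (edgeEvent M r i j) = connProb M r := fun j => by
    rw [measureReal_def, measure_edgeEvent M hr hi (hJ j j.2),
      ENNReal.toReal_ofReal (connProb_nonneg M hr)]
  simpa [hprob, edgeCount_eq_sum_indicator, Finset.sum_fn] using hsum

/-! ### Degrees -/

lemma deg_eq_edgeCount (M : Model d P) {n i : ℕ} (r : ℝ) (ω : Ω) (hi : 1 ≤ i)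
    (hiN : i ≤ M.N n ω) :
    deg M n r ω i = edgeCount M r i ((Finset.Icc 1 (M.N n ω)).erase i) ω := by
  classical
  rw [deg, edgeCount, ← ncard_coe_finset]
  congr 1
  ext j
  simp only [adj, edgeEvent, mem_ofPred_eq]
  grind

lemma minDeg_le_deg (M : Model d P) {n i : ℕ} (r : ℝ) (ω : Ω) (hi : 1 ≤ i)
    (hiN : i ≤ M.N n ω) : minDeg M n r ω ≤ deg M n r ω i :=
  Nat.sInf_le ⟨i, hi, hiN, rfl⟩

lemma le_minDeg (M : Model d P) {n t : ℕ} {r : ℝ} {ω : Ω} (hN : 1 ≤ M.N n ω)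
    (h : ∀ i, 1 ≤ i → i ≤ M.N n ω → t ≤ deg M n r ω i) : t ≤ minDeg M n r ω :=
  le_csInf ⟨_, 1, le_rfl, hN, rfl⟩ fun _ ⟨i, hi, hiN, hdeg⟩ => hdeg ▸ h i hi hiN

/-! ### The scale `r̂_n(γ)` -/

section Scale

variable {γ : ℝ}

lemma rhat_pow (M : Model d P) (hd : d ≠ 0) (hγ : 0 < γ) (n : ℕ) :
    rhat M γ n ^ d = γ * Real.log n / (M.α * n) := by
  have hα := M.α_pos
  rw [rhat, one_div, Real.rpow_inv_natCast_pow (by positivity) hd]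

lemma rhat_pos (M : Model d P) (hγ : 0 < γ) {n : ℕ} (hn : 2 ≤ n) : 0 < rhat M γ n := by
  have hα := M.α_pos
  have hlog : 0 < Real.log n := Real.log_pos (Nat.one_lt_cast.2 hn)
  unfold rhat
  positivity

lemma rhat_antitoneOn (M : Model d P) (hγ : 0 < γ) : AntitoneOn (rhat M γ) (Ici 3) := by
  intro n hn m hm hnm
  have hα := M.α_pos
  have hexp : ∀ k : ℕ, 3 ≤ k → Real.exp 1 ≤ k := fun k hk =>
    (Real.exp_one_lt_d9.le.trans (by norm_num)).trans (Nat.ofNat_le_cast.2 hk)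
  refine Real.rpow_le_rpow (by positivity) ?_ (by positivity)
  rw [mul_div_mul_comm, mul_div_mul_comm]
  gcongr ?_ * ?_
  exact Real.log_div_self_antitoneOn (hexp n hn) (hexp m hm) (Nat.cast_le.2 hnm)

lemma tendsto_rhat (M : Model d P) (hd : d ≠ 0) (hγ : 0 < γ) :
    Tendsto (rhat M γ) atTop (nhdsWithin 0 (Ioi 0)) := by
  have hd' : (0 : ℝ) < 1 / d := by positivity
  have hlog : Tendsto (fun n : ℕ => Real.log n / n) atTop (nhds 0) :=
    Real.isLittleO_log_id_atTop.tendsto_div_nhds_zero.comp tendsto_natCast_atTop_atTop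
  have hbase : Tendsto (fun n : ℕ => γ * Real.log n / (M.α * n)) atTop (nhds 0) := by
    simpa only [mul_div_mul_comm, mul_zero] using hlog.const_mul (γ / M.α)
  have h := hbase.rpow_const (p := 1 / (d : ℝ)) (Or.inr hd'.le)
  rw [Real.zero_rpow hd'.ne'] at h
  exact tendsto_nhdsWithin_iff.2 ⟨h, (eventually_ge_atTop 2).mono fun n hn => rhat_pos M hγ hn⟩

lemma mul_connProb_rhat_le (M : Model d P) (hd : d ≠ 0) (hγ : 0 < γ) {n : ℕ} (hn : 2 ≤ n) :
    n * connProb M (rhat M γ n) ≤ γ * Real.log n := by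
  have hα := M.α_pos
  calc n * connProb M (rhat M γ n)
      ≤ n * (M.α * rhat M γ n ^ d) := by gcongr; exact connProb_le M (rhat_pos M hγ hn)
    _ = γ * Real.log n := by rw [rhat_pow M hd hγ]; field_simp

lemma tendsto_mul_connProb_rhat_div_log (M : Model d P) (hd : d ≠ 0) (hγ : 0 < γ) :
    Tendsto (fun n : ℕ => n * connProb M (rhat M γ n) / Real.log n) atTop (nhds γ) := by
  have hα := M.α_pos
  have h := ((tendsto_connProb_div_pow M).comp (tendsto_rhat M hd hγ)).mul_const (γ / M.α)
  rw [mul_div_cancel₀ _ hα.ne'] at h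
  refine h.congr fun n => ?_
  rw [Function.comp_apply, rhat_pow M hd hγ]
  field_simp

lemma eventually_mul_log_le_mul_connProb_rhat (M : Model d P) (hd : d ≠ 0) (hγ : 0 < γ) {c : ℝ}
    (hc : c < γ) : ∀ᶠ n : ℕ in atTop, c * Real.log n ≤ n * connProb M (rhat M γ n) := by
  filter_upwards [(tendsto_mul_connProb_rhat_div_log M hd hγ).eventually_const_lt hc,
    eventually_ge_atTop 2] with n hcn hn
  exact ((lt_div_iff₀ (Real.log_pos (Nat.one_lt_cast.2 hn))).1 hcn).le

end Scale

/-! ### Almost sure bounds for the minimum degree -/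

lemma ae_exists_eventually_edgeCount_one_le [IsProbabilityMeasure P] (M : Model d P) (hd : d ≠ 0)
    {γ : ℝ} (hγ : 0 < γ) :
    ∃ C : ℝ, ∀ᵐ ω ∂P, ∀ᶠ n : ℕ in atTop,
      edgeCount M (rhat M γ n) 1 ((Finset.Icc 1 (2 * n)).erase 1) ω ≤ C * Real.log n := by
  obtain ⟨x, hHx, hx⟩ :=
    ((tendsto_H_atTop.eventually_ge_atTop (1 / γ)).and (eventually_ge_atTop 1)).exists
  rw [div_le_iff₀' hγ] at hHx
  refine ⟨x * (2 * γ), ?_⟩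
  have hcount : ∀ᵐ ω ∂P, ∀ᶠ n : ℕ in atTop, ω ∉ {ω | x * (2 * γ * Real.log n)
      ≤ edgeCount M (rhat M γ n) 1 ((Finset.Icc 1 (2 * n)).erase 1) ω} := by
    refine ae_eventually_notMem_of_le (Real.summable_nat_pow_inv.2 one_lt_two) ?_
    filter_upwards [eventually_ge_atTop 2] with n hn
    have hlog : 0 < Real.log n := Real.log_pos (Nat.one_lt_cast.2 hn)
    have hn0 : (0 : ℝ) < n := Nat.cast_pos.2 (by lia)
    have hr := rhat_pos M hγ hn
    have hmean : (((Finset.Icc 1 (2 * n)).erase 1).card : ℝ) * connProb M (rhat M γ n)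
        ≤ 2 * γ * Real.log n := by
      have hcard : (((Finset.Icc 1 (2 * n)).erase 1).card : ℝ) ≤ 2 * n := by
        exact_mod_cast Finset.card_erase_le.trans (Nat.card_Icc 1 _).le
      nlinarith [mul_le_mul_of_nonneg_right hcard (connProb_nonneg M hr),
        mul_connProb_rhat_le M hd hγ hn]
    refine ((hasSubPoissonMGF_edgeCount M hr le_rfl (by grind)).measureReal_ge_le
      (by positivity) (le_mul_of_one_le_left (by positivity) hx) hmean).trans ?_
    rw [mul_div_cancel_right₀ _ (by positivity), ← Real.exp_log (inv_pos.2 (pow_pos hn0 2)),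
      Real.log_inv, Real.log_pow]
    exact Real.exp_le_exp.2 (by push_cast; nlinarith)
  filter_upwards [hcount] with ω hω
  filter_upwards [hω] with n hn
  rw [mul_assoc]
  exact (not_le.1 hn).le

lemma ae_exists_eventually_minDeg_le [IsProbabilityMeasure P] (M : Model d P) (hd : d ≠ 0) {γ : ℝ}
    (hγ : 0 < γ) :
    ∃ C : ℝ, ∀ᵐ ω ∂P, ∀ᶠ n : ℕ in atTop, minDeg M n (rhat M γ n) ω ≤ C * Real.log n := by
  obtain ⟨C, hC⟩ := ae_exists_eventually_edgeCount_one_le M hd hγ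
  refine ⟨C, ?_⟩
  filter_upwards [hC, ae_eventually_N_le_two_mul M,
    ae_eventually_mul_le_N M (b := 1 / 2) (by norm_num)] with ω hω hNle hleN
  filter_upwards [hω, hNle, hleN, eventually_ge_atTop 2] with n hn hNle hleN hn2
  have hN : 1 ≤ M.N n ω := by
    have : (2 : ℝ) ≤ n := Nat.ofNat_le_cast.2 hn2
    exact_mod_cast (by linarith : (1 : ℝ) ≤ M.N n ω)
  have hdeg : minDeg M n (rhat M γ n) ω
      ≤ edgeCount M (rhat M γ n) 1 ((Finset.Icc 1 (2 * n)).erase 1) ω :=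
    ((minDeg_le_deg M _ ω le_rfl hN).trans (deg_eq_edgeCount M _ ω le_rfl hN).le).trans
      (edgeCount_mono M (rhat_pos M hγ hn2) le_rfl 1
        (Finset.erase_subset_erase 1 (Finset.Icc_subset_Icc_right hNle)) ω)
  exact (Nat.cast_le.2 hdeg).trans hn


lemma le_minDeg_of_forall_le_edgeCount (M : Model d P) {n n' K L t : ℕ} {r r' : ℝ} {ω : Ω}
    (hr' : 0 < r') (hrr : r' ≤ r) (hnn : n ≤ n') (hL : 1 ≤ L) (hLN : L ≤ M.N n ω)
    (hNK : M.N n' ω ≤ K)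
    (h : ∀ i ∈ Finset.Icc 1 K, t ≤ edgeCount M r' i ((Finset.Icc 1 L).erase i) ω) :
    t ≤ minDeg M n r ω := by
  refine le_minDeg M (hL.trans hLN) fun i hi hiN => ?_
  rw [deg_eq_edgeCount M r ω hi hiN]
  exact (h i (Finset.mem_Icc.2 ⟨hi, (hiN.trans (M.N_mono ω hnn)).trans hNK⟩)).trans
    (edgeCount_mono M hr' hrr i
      (Finset.erase_subset_erase i (Finset.Icc_subset_Icc_right hLN)) ω)

lemma measureReal_exists_edgeCount_le [IsProbabilityMeasure P] (M : Model d P) {r : ℝ} (hr : 0 < r)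
    {K L : ℕ} {a μ : ℝ} (ha : 0 < a) (haμ : a ≤ μ) (hμ : μ ≤ L * connProb M r) :
    P.real {ω | ∃ i ∈ Finset.Icc 1 K,
        (edgeCount M r i ((Finset.Icc 1 (L + 1)).erase i) ω : ℝ) ≤ a}
      ≤ K * Real.exp (-(μ * H (a / μ))) := by
  have hone : ∀ i ∈ Finset.Icc 1 K,
      P.real {ω | (edgeCount M r i ((Finset.Icc 1 (L + 1)).erase i) ω : ℝ) ≤ a}
        ≤ Real.exp (-(μ * H (a / μ))) := fun i hi => by
    have hcard : (L : ℝ) ≤ ((Finset.Icc 1 (L + 1)).erase i).card := by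
      simpa using Finset.pred_card_le_card_erase (s := Finset.Icc 1 (L + 1)) (a := i)
    exact (hasSubPoissonMGF_edgeCount M hr (Finset.mem_Icc.1 hi).1 (by grind)).measureReal_le_le
      ha haμ (hμ.trans (mul_le_mul_of_nonneg_right hcard (connProb_nonneg M hr)))
  simp only [← exists_prop, ofPred_exists]
  refine (measureReal_biUnion_finset_le _ _).trans ?_
  simpa using Finset.sum_le_sum hone

lemma eventually_measureReal_exists_edgeCount_le [IsProbabilityMeasure P] (M : Model d P)
    (hd : d ≠ 0) {γ β b : ℝ} (hγ : 0 < γ) (hβ : 0 < β) (hb : b ∈ Ioo 0 1) (hβb : β ≤ b ^ 3 * γ) :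
    ∀ᶠ m : ℕ in atTop, P.real {ω | ∃ i ∈ Finset.Icc 1 (2 * m), (edgeCount M (rhat M γ m) i
        ((Finset.Icc 1 (⌈b ^ 2 * m⌉₊ + 1)).erase i) ω : ℝ) ≤ β * Real.log m}
      ≤ 2 * (m : ℝ) ^ (1 - b ^ 3 * γ * H (β / (b ^ 3 * γ))) := by
  filter_upwards [eventually_mul_log_le_mul_connProb_rhat M hd hγ (mul_lt_of_lt_one_left hγ hb.2),
    eventually_ge_atTop 2] with m hmean hm
  have hlog : 0 < Real.log m := Real.log_pos (Nat.one_lt_cast.2 hm)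
  have hm' : (0 : ℝ) < m := Nat.cast_pos.2 (by lia)
  have hr := rhat_pos M hγ hm
  have hμ : b ^ 3 * γ * Real.log m
      ≤ ⌈b ^ 2 * m⌉₊ * connProb M (rhat M γ m) := by
    calc b ^ 3 * γ * Real.log m = b ^ 2 * (b * γ * Real.log m) := by ring
      _ ≤ b ^ 2 * (m * connProb M (rhat M γ m)) := by gcongr
      _ = b ^ 2 * m * connProb M (rhat M γ m) := by ring
      _ ≤ ⌈b ^ 2 * m⌉₊ * connProb M (rhat M γ m) :=
        mul_le_mul_of_nonneg_right (Nat.le_ceil _) (connProb_nonneg M hr)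
  refine (measureReal_exists_edgeCount_le M hr (mul_pos hβ hlog) (by gcongr) hμ).trans_eq ?_
  rw [mul_div_mul_right _ _ hlog.ne', Real.rpow_sub hm', Real.rpow_one, Real.rpow_def_of_pos hm',
    Real.exp_neg]
  push_cast
  ring_nf

lemma exists_ae_eventually_mul_log_le_edgeCount [IsProbabilityMeasure P] (M : Model d P)
    (hd : d ≠ 0) {γ β : ℝ} (hγ : 0 < γ) (hβ : 0 < β) (hβγ : β < γ * Hminusinv (1 / γ)) :
    ∃ b ∈ Ioo (0 : ℝ) 1, ∃ a ≠ 0, ∀ᵐ ω ∂P, ∀ᶠ k : ℕ in atTop, ∀ i ∈ Finset.Icc 1 (2 * k ^ a),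
      β * Real.log (k ^ a : ℕ) ≤ edgeCount M (rhat M γ (k ^ a)) i
        ((Finset.Icc 1 (⌈b ^ 2 * (k ^ a : ℕ)⌉₊ + 1)).erase i) ω := by
  obtain ⟨b, hb, hβb, hrate⟩ := exists_pow_three_mul_H_gt_one hγ hβ hβγ
  obtain ⟨a, ha⟩ := exists_nat_gt (1 / (b ^ 3 * γ * H (β / (b ^ 3 * γ)) - 1))
  rw [div_lt_iff₀ (sub_pos.2 hrate)] at ha
  have ha0 : a ≠ 0 := by
    rintro rfl
    norm_num at ha
  have hexp : a * (1 - b ^ 3 * γ * H (β / (b ^ 3 * γ))) < -1 := by linarith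
  have hsum : Summable fun k : ℕ =>
      2 * ((k ^ a : ℕ) : ℝ) ^ (1 - b ^ 3 * γ * H (β / (b ^ 3 * γ))) := by
    refine ((Real.summable_nat_rpow.2 hexp).mul_left 2).congr fun k => ?_
    rw [Nat.cast_pow, ← Real.rpow_natCast (k : ℝ) a, ← Real.rpow_mul (Nat.cast_nonneg k)]
  refine ⟨b, hb, a, ha0, ?_⟩
  filter_upwards [ae_eventually_notMem_of_le hsum ((tendsto_pow_atTop ha0).eventually
    (eventually_measureReal_exists_edgeCount_le M hd hγ hβ hb hβb))] with ω hω
  exact hω.mono fun k hk i hi => (not_le.1 fun hle => hk ⟨i, hi, hle⟩).le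

lemma ae_eventually_mul_log_le_minDeg [IsProbabilityMeasure P] (M : Model d P) (hd : d ≠ 0)
    {γ β : ℝ} (hγ : 0 < γ) (hβ : β < γ * Hminusinv (1 / γ)) :
    ∀ᵐ ω ∂P, ∀ᶠ n : ℕ in atTop, β * Real.log n ≤ minDeg M n (rhat M γ n) ω := by
  obtain hβ0 | hβ0 := le_or_gt β 0
  · exact .of_forall fun ω => .of_forall fun n =>
      (mul_nonpos_of_nonpos_of_nonneg hβ0 (Real.log_natCast_nonneg n)).trans (Nat.cast_nonneg _)
  obtain ⟨b, hb, a, ha, hcount⟩ := exists_ae_eventually_mul_log_le_edgeCount M hd hγ hβ0 hβ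
  filter_upwards [hcount, ae_eventually_N_le_two_mul M, ae_eventually_mul_le_N M hb]
    with ω hcount hNle hleN
  refine eventually_of_forall_between_pow ha ?_
  filter_upwards [(tendsto_add_atTop_nat 1).eventually hcount,
    ((tendsto_pow_atTop ha).comp (tendsto_add_atTop_nat 1)).eventually hNle,
    (tendsto_pow_atTop ha).eventually hleN, eventually_ge_atTop 3,
    eventually_ceil_mul_succ_pow_add_one_le (sq_nonneg b)
      (pow_lt_self_of_lt_one₀ hb.1 hb.2 one_lt_two) ha]
    with k hcount hNle hleN hk hL n hkn hnk
  have hn : 3 ≤ n := (hk.trans (Nat.le_self_pow ha k)).trans hkn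
  have hLN : ⌈b ^ 2 * ((k + 1) ^ a : ℕ)⌉₊ + 1 ≤ M.N n ω := by
    rw [Nat.cast_pow] at hleN
    exact (Nat.cast_le.1 (by exact_mod_cast hL.trans hleN)).trans (M.N_mono ω hkn)
  refine Nat.ceil_le.1 (le_minDeg_of_forall_le_edgeCount M (rhat_pos M hγ (by lia))
    (rhat_antitoneOn M hγ hn (hn.trans hnk) hnk) hnk (Nat.le_add_left 1 _) hLN hNle fun i hi => ?_)
  refine Nat.ceil_le.2 (le_trans ?_ (hcount i hi))
  gcongr

theorem minDeg_liminf_ge_general (hd : d ≠ 0) [IsProbabilityMeasure P] (M : Model d P) {γ : ℝ}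
    (hγ : 0 < γ) :
    ∀ᵐ ω ∂P, γ * Hminusinv (1 / γ) ≤ Filter.liminf
      (fun n : ℕ => (minDeg M n (rhat M γ n) ω : ℝ) / Real.log n) atTop := by
  obtain ⟨C, hC⟩ := ae_exists_eventually_minDeg_le M hd hγ
  refine ae_le_of_forall_lt fun β hβ => ?_
  filter_upwards [hC, ae_eventually_mul_log_le_minDeg M hd hγ hβ] with ω hupper hlower
  have hlog : ∀ᶠ n : ℕ in atTop, 0 < Real.log n :=
    (eventually_ge_atTop 2).mono fun n hn => Real.log_pos (Nat.one_lt_cast.2 hn)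
  refine le_liminf_of_le (IsCoboundedUnder.of_frequently_le (a := C) (Eventually.frequently ?_)) ?_
  · filter_upwards [hupper, hlog] with n hn hlog using (div_le_iff₀ hlog).2 hn
  · filter_upwards [hlower, hlog] with n hn hlog using (le_div_iff₀ hlog).2 hn

/-- Theorem 4(ii): for `γ > 1`, a.s. `liminf δ_n/log n ≥ γ H₋⁻¹(1/γ)`. -/
theorem minDeg_liminf_ge (hd : 2 ≤ d) [IsProbabilityMeasure P] (M : Model d P)
    {c : ℝ} (hc : (d : ℝ) < c)
    (hg : M.g =o[atTop] fun r : ℝ => r ^ (-c))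
    {γ : ℝ} (hγ : 1 < γ) :
    ∀ᵐ ω ∂P, γ * Hminusinv (1 / γ) ≤ Filter.liminf
      (fun n : ℕ => (minDeg M n (rhat M γ n) ω : ℝ) / Real.log n) atTop :=
  minDeg_liminf_ge_general (by lia) M (zero_lt_one.trans hγ)

end RCM
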